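/- Let q = 2^k, ω = exp(2πi/q), and let F_{2^m} be the finite field with 2^m elements with absolute trace Tr : F_{2^m} → F_2. For j = 0,1,…,k−1 let G_j : F_{2^m} → F_2 be balanced Boolean functions (each value 0 and 1 is attained 2^{m−1} times) with G_j(0) = 0 and Σ_{t ∈ F_{2^m}} ω^{Σ_{j=0}^{k−1} 2^j G_j(t)} = 0. If G_j(u) = G_j(1/u) for all u ∈ F_{2^m} (with the convention 1/0 = 0), then the function f : F_{2^m} × F_{2^m} → Z_{2^k} given by f(x,y) = Σ_{j=0}^{k−1} 2^j G_j(x/y) (with x/0 = 0) satisfies H_f(a,b) = 2^m · ω^{f(a,b)} for all a,b ∈ F_{2^m}, i.e., f is a self-dual gbent function in 2m variables. -/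

import Mathlib

/-!
Write `g t = ω ^ (∑ 2^j G_j(t))` and `ψ z = (-1) ^ Tr z`, a primitive additive character of `F`.
Splitting the Walsh sum over the lines `x = t y` through the origin, the line `y = 0` contributes
`g 0 * ∑ x, ψ (a x)`, and the line of slope `t` contributes `g t * ((∑ y, ψ ((a t + b) y)) - 1)`.
Orthogonality of characters and `∑ g t = 0` leave only the line on which `a x + b y` vanishes,
so the sum is `2^m g (b / a)` if `a ≠ 0`, and `2^m g 0` if `a = 0` (`walsh_lines`, where the sign
in `-b / a` disappears in characteristic two). Invariance of `g` under inversion turns `g (b / a)` into `g (a / b)`.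
-/

/-- ω = exp(2πi/q), a primitive q-th root of unity. -/
noncomputable def omega (q : ℕ) : ℂ := Complex.exp (2 * Real.pi * Complex.I / q)

/-- The additive character `z ↦ (-1) ^ Tr z` of a field extension of `𝔽₂`. -/
noncomputable def traceChar (F : Type) [Field F] [Algebra (ZMod 2) F] : AddChar F ℂ :=
  (AddChar.zmodChar 2 (ζ := (-1 : ℂ)) (by norm_num)).compAddMonoidHom
    (Algebra.trace (ZMod 2) F).toAddMonoidHom

lemma traceChar_apply (F : Type) [Field F] [Algebra (ZMod 2) F] (z : F) :
    traceChar F z = (-1 : ℂ) ^ (Algebra.trace (ZMod 2) F z).val := by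
  simp [traceChar, AddChar.zmodChar_apply]

lemma traceChar_isPrimitive (F : Type) [Field F] [Fintype F] [Algebra (ZMod 2) F] :
    (traceChar F).IsPrimitive := by
  apply AddChar.IsPrimitive.of_ne_one
  intro h
  obtain ⟨z, hz⟩ := Algebra.trace_surjective (ZMod 2) F 1
  have h1 := DFunLike.congr_fun h z
  rw [traceChar_apply, hz] at h1
  norm_num [ZMod.val_one] at h1

/-- The Walsh sum of a function of `x / y`, evaluated by splitting it over the lines through the
origin. Here `x / 0 = 0`, so the line `y = 0` carries the value `g 0`. -/
lemma walsh_lines {F : Type} [Field F] [Fintype F] [DecidableEq F] {ψ : AddChar F ℂ}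
    (hψ : ψ.IsPrimitive) (g : F → ℂ) (hg : ∑ t, g t = 0) (a b : F) :
    ∑ x : F, ∑ y : F, g (x * y⁻¹) * ψ (a * x + b * y)
      = (Fintype.card F : ℂ) * if a = 0 then g 0 else g (-b * a⁻¹) := by
  have line : ∀ y : F, ∑ x : F, g (x * y⁻¹) * ψ (a * x + b * y)
      = ∑ t : F, g t * ψ (y * (a * t + b))
        + if y = 0 then g 0 * ∑ x : F, ψ (x * a) else 0 := by
    intro y
    by_cases hy : y = 0
    · subst hy
      simp [hg, Finset.mul_sum, mul_comm a]
    · rw [if_neg hy, add_zero]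
      refine Fintype.sum_equiv (Equiv.mulRight₀ y⁻¹ (inv_ne_zero hy)) _ _ fun x => ?_
      have e : y * (a * (x * y⁻¹) + b) = a * x + b * y := by field_simp
      simp only [Equiv.mulRight₀_apply, e]
  have slopes : ∑ t : F, ∑ y : F, g t * ψ (y * (a * t + b))
      = (Fintype.card F : ℂ) * ∑ t : F, if a * t + b = 0 then g t else 0 := by
    rw [Finset.mul_sum]
    refine Finset.sum_congr rfl fun t _ => ?_
    rw [← Finset.mul_sum, AddChar.sum_mulShift _ hψ]
    split_ifs <;> simp [mul_comm]
  rw [Finset.sum_comm, Finset.sum_congr rfl fun y _ => line y, Finset.sum_add_distrib,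
    Finset.sum_comm, slopes, AddChar.sum_mulShift _ hψ]
  by_cases ha : a = 0
  · subst ha
    by_cases hb : b = 0 <;> simp [hb, hg, mul_comm]
  · have e : ∀ t : F, a * t + b = 0 ↔ t = -b * a⁻¹ := fun t => by
      rw [← div_eq_mul_inv, eq_div_iff ha, mul_comm, ← eq_neg_iff_add_eq_zero]
    simp [ha, e]

lemma omega_pow_natCast_val (q : ℕ) [NeZero q] (n : ℕ) :
    omega q ^ ((n : ZMod q)).val = omega q ^ n := by
  have h : omega q ^ q = 1 := (Complex.isPrimitiveRoot_exp q (NeZero.ne q)).pow_eq_one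
  rw [ZMod.val_natCast, ← pow_eq_pow_mod n h]

/-- Dillon-type (PS_ap) self-dual gbent functions: if the balanced functions
`G_j` satisfy `G_j(u) = G_j(1/u)`, then `f(x,y) = Σ 2^j G_j(x/y)` is a self-dual
gbent function in `2m` variables. -/
theorem dillon_selfDual (k m : ℕ) (hk : 1 ≤ k) (hm : 1 ≤ m)
    (F : Type) [Field F] [Fintype F] [DecidableEq F] [Algebra (ZMod 2) F]
    (hcard : Fintype.card F = 2 ^ m)
    (G : ℕ → F → ZMod 2)
    (hbal : ∀ j < k, ∀ v : ZMod 2,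
      (Finset.univ.filter (fun t : F => G j t = v)).card = 2 ^ (m - 1))
    (hzero : ∀ j < k, G j 0 = 0)
    (hsum : ∑ t : F, omega (2 ^ k) ^ (∑ j ∈ Finset.range k, 2 ^ j * (G j t).val) = 0)
    (hinv : ∀ j < k, ∀ u : F, G j u = G j u⁻¹)
    (f : F × F → ZMod (2 ^ k))
    (hf : ∀ x y : F, f (x, y) = ∑ j ∈ Finset.range k,
      (2 ^ j : ZMod (2 ^ k)) * ((G j (x * y⁻¹)).val : ZMod (2 ^ k))) :
    ∀ a b : F,
      (∑ x : F, ∑ y : F, omega (2 ^ k) ^ (f (x, y)).val *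
          (-1 : ℂ) ^ ((Algebra.trace (ZMod 2) F) (a * x) +
            (Algebra.trace (ZMod 2) F) (b * y)).val)
        = (2 ^ m : ℂ) * omega (2 ^ k) ^ (f (a, b)).val := by
  intro a b
  set g : F → ℂ := fun t => omega (2 ^ k) ^ (∑ j ∈ Finset.range k, 2 ^ j * (G j t).val) with hg
  have hfg : ∀ x y : F, omega (2 ^ k) ^ (f (x, y)).val = g (x * y⁻¹) := by
    intro x y
    have e : f (x, y)
        = ((∑ j ∈ Finset.range k, 2 ^ j * (G j (x * y⁻¹)).val : ℕ) : ZMod (2 ^ k)) := by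
      rw [hf]; push_cast; rfl
    rw [e, omega_pow_natCast_val]
  have hginv : ∀ t, g t⁻¹ = g t := by
    intro t
    simp only [hg]
    congr 1
    refine Finset.sum_congr rfl fun j hj => ?_
    rw [← hinv j (Finset.mem_range.1 hj) t]
  have : CharP F 2 := charP_of_injective_algebraMap (algebraMap (ZMod 2) F).injective 2
  simp_rw [hfg, ← map_add, ← traceChar_apply]
  rw [walsh_lines (traceChar_isPrimitive F) g hsum, hcard]
  push_cast
  congr 1
  split_ifs with ha
  · simp [ha]
  · rw [CharTwo.neg_eq, ← hginv, mul_inv, inv_inv, mul_comm]
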